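/- arXiv:1403.1682 — 3 statements merged into one kernel-verified Lean document; each statement's English description precedes it below -/
import Mathlib

section
/- Suppose that in degree k the spaces H^k_∂, H^k_∂̄, H^k_BC, H^k_A, A^k, B^k, C^k, D^k, E^k, F^k are all finite-dimensional. Then dim H^k_BC + dim H^k_A ≥ dim H^k_∂ + dim H^k_∂̄. (This is the Angella–Tomassini Frölicher-type inequality for generalized complex manifolds, in its algebraic form.) -/
open Submodule LinearMap Module

section Setup

variable (U : ℤ → Type*) [∀ k, AddCommGroup (U k)] [∀ k, Module ℂ (U k)]

/-- The identification `U a → U b` induced by an equality `a = b` of degrees. -/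
def castU {a b : ℤ} (h : a = b) : U a →ₗ[ℂ] U b := by subst h; exact LinearMap.id

variable (D : ∀ k : ℤ, U k →ₗ[ℂ] U (k + 1)) (Db : ∀ k : ℤ, U k →ₗ[ℂ] U (k - 1))

/-- The composite `∂∂̄ : U^k → U^{k-1} → U^k`. -/
def ddbar (k : ℤ) : U k →ₗ[ℂ] U k :=
  (castU U (show k - 1 + 1 = k by ring)).comp ((D (k - 1)).comp (Db k))

/-- `ker ∂ ∩ U^k` -/
def kerD (k : ℤ) : Submodule ℂ (U k) := LinearMap.ker (D k)

/-- `ker ∂̄ ∩ U^k` -/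
def kerDb (k : ℤ) : Submodule ℂ (U k) := LinearMap.ker (Db k)

/-- `∂(U^{k-1})` -/
def imD (k : ℤ) : Submodule ℂ (U k) :=
  LinearMap.range ((castU U (show k - 1 + 1 = k by ring)).comp (D (k - 1)))

/-- `∂̄(U^{k+1})` -/
def imDb (k : ℤ) : Submodule ℂ (U k) :=
  LinearMap.range ((castU U (show k + 1 - 1 = k by ring)).comp (Db (k + 1)))

/-- `ker (∂∂̄) ∩ U^k` -/
def kerDDbar (k : ℤ) : Submodule ℂ (U k) := LinearMap.ker (ddbar U D Db k)

/-- `(∂∂̄)(U^k)` -/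
def imDDbar (k : ℤ) : Submodule ℂ (U k) := LinearMap.range (ddbar U D Db k)

end Setup

/-- The quotient of a submodule `p` by (the preimage in `p` of) a submodule `q`. -/
abbrev SubQuot {V : Type*} [AddCommGroup V] [Module ℂ V] (p q : Submodule ℂ V) :=
  ↥p ⧸ q.comap p.subtype

/-- The map `p/q → p'/q'` induced by the identity (inclusion) on representatives. -/
def qmap {V : Type*} [AddCommGroup V] [Module ℂ V] {p p' q q' : Submodule ℂ V}
    (hp : p ≤ p') (hq : q ≤ q') : SubQuot p q →ₗ[ℂ] SubQuot p' q' :=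
  Submodule.mapQ _ _ (Submodule.inclusion hp) fun x hx => by
    simp only [Submodule.mem_comap, Submodule.subtype_apply, Submodule.coe_inclusion] at hx ⊢
    exact hq hx

section Cohomology

variable (U : ℤ → Type*) [∀ k, AddCommGroup (U k)] [∀ k, Module ℂ (U k)]
variable (D : ∀ k : ℤ, U k →ₗ[ℂ] U (k + 1)) (Db : ∀ k : ℤ, U k →ₗ[ℂ] U (k - 1))

/-- `H^k_∂ = (ker ∂ ∩ U^k)/∂(U^{k-1})` -/
abbrev Hd (k : ℤ) := SubQuot (kerD U D k) (imD U D k)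

/-- `H^k_∂̄ = (ker ∂̄ ∩ U^k)/∂̄(U^{k+1})` -/
abbrev Hdb (k : ℤ) := SubQuot (kerDb U Db k) (imDb U Db k)

/-- `H^k_BC = (ker ∂ ∩ ker ∂̄ ∩ U^k)/(∂∂̄)(U^k)` -/
abbrev HBC (k : ℤ) := SubQuot (kerD U D k ⊓ kerDb U Db k) (imDDbar U D Db k)

/-- `H^k_A = (ker (∂∂̄) ∩ U^k)/(∂(U^{k-1}) + ∂̄(U^{k+1}))` -/
abbrev HA (k : ℤ) := SubQuot (kerDDbar U D Db k) (imD U D k ⊔ imDb U Db k)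

/-- `A^k = (∂(U^{k-1}) ∩ ∂̄(U^{k+1}))/(∂∂̄)(U^k)` -/
abbrev Avar (k : ℤ) := SubQuot (imD U D k ⊓ imDb U Db k) (imDDbar U D Db k)

/-- `B^k = (ker ∂̄ ∩ ∂(U^{k-1}))/(∂∂̄)(U^k)` -/
abbrev Bvar (k : ℤ) := SubQuot (kerDb U Db k ⊓ imD U D k) (imDDbar U D Db k)

/-- `C^k = (ker (∂∂̄) ∩ U^k)/((ker ∂̄ ∩ U^k) + ∂(U^{k-1}))` -/
abbrev Cvar (k : ℤ) := SubQuot (kerDDbar U D Db k) (kerDb U Db k ⊔ imD U D k)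

/-- `D^k = (ker ∂ ∩ ∂̄(U^{k+1}))/(∂∂̄)(U^k)` -/
abbrev Dvar (k : ℤ) := SubQuot (kerD U D k ⊓ imDb U Db k) (imDDbar U D Db k)

/-- `E^k = (ker (∂∂̄) ∩ U^k)/((ker ∂ ∩ U^k) + ∂̄(U^{k+1}))` -/
abbrev Evar (k : ℤ) := SubQuot (kerDDbar U D Db k) (kerD U D k ⊔ imDb U Db k)

/-- `F^k = (ker (∂∂̄) ∩ U^k)/((ker ∂ ∩ U^k) + (ker ∂̄ ∩ U^k))` -/
abbrev Fvar (k : ℤ) := SubQuot (kerDDbar U D Db k) (kerD U D k ⊔ kerDb U Db k)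

end Cohomology

/-!
The inequality comes from an identity between ranks of subquotients of a module: for submodules
`I ≤ P` and `J ≤ Q`, the two short exact sequences

* `0 → (P ⊓ Q) / (I ⊓ Q) → P / I → (P ⊔ Q) / (I ⊔ Q) → 0`,
* `0 → (I ⊓ Q) / (I ⊓ J) → Q / J → (I ⊔ Q) / (I ⊔ J) → 0`

telescope to `rk (P / I) + rk (Q / J) = rk ((P ⊓ Q) / (I ⊓ J)) + rk ((P ⊔ Q) / (I ⊔ J))`. With
`P = ker ∂`, `I = im ∂`, `Q = ker ∂̄`, `J = im ∂̄`, the right-hand side falls short of the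
Bott–Chern and Aeppli ranks exactly by the ranks of `A = (im ∂ ⊓ im ∂̄) / im ∂∂̄` and
`F = ker ∂∂̄ / (ker ∂ ⊔ ker ∂̄)`.
-/

section RelRank

universe u v

variable {R : Type v} [Ring R] {M : Type u} [AddCommGroup M] [Module R M]

/-- The relative rank of `q` in `p`: the rank of the subquotient `p / (p ⊓ q)`. As for
`Subgroup.relIndex`, the inclusion `q ≤ p` is not required. -/
noncomputable def relRank (q p : Submodule R M) : Cardinal :=
  Module.rank R (p ⧸ q.comap p.subtype)

theorem relRank_inf_left (p q : Submodule R M) : relRank (p ⊓ q) p = relRank q p := by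
  rw [relRank, relRank, comap_inf, comap_subtype_self, top_inf_eq]

theorem relRank_eq_rank_map_mkQ (q p : Submodule R M) :
    relRank q p = Module.rank R (p.map q.mkQ) := by
  have hker : ker (q.mkQ.domRestrict p) = q.comap p.subtype := by
    rw [domRestrict, ker_comp, ker_mkQ]
  have hrange : range (q.mkQ.domRestrict p) = p.map q.mkQ := range_domRestrict p q.mkQ
  rw [relRank, ← hker, (q.mkQ.domRestrict p).quotKerEquivRange.rank_eq, hrange]

theorem relRank_sup_right (q p : Submodule R M) : relRank q (p ⊔ q) = relRank q p := by
  rw [relRank_eq_rank_map_mkQ, relRank_eq_rank_map_mkQ, Submodule.map_sup, mkQ_map_self, sup_bot_eq]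

variable [HasRankNullity.{u} R]

theorem rank_map_add_rank_inf_ker {N : Type u} [AddCommGroup N] [Module R N] (f : M →ₗ[R] N)
    (p : Submodule R M) :
    Module.rank R (p.map f) + Module.rank R ↥(p ⊓ ker f) = Module.rank R p := by
  have hker : (ker (f.domRestrict p)).map p.subtype = p ⊓ ker f := by
    rw [domRestrict, ker_comp, map_comap_subtype]
  rw [← range_domRestrict, ← hker, rank_map_eq p.injective_subtype, rank_range_add_rank_ker]

theorem relRank_add_relRank {q m p : Submodule R M} (hqm : q ≤ m) (hmp : m ≤ p) :
    relRank q m + relRank m p = relRank q p := by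
  have hmap : (p.map q.mkQ).map (factor hqm) = p.map m.mkQ := by
    rw [← map_comp, factor_comp_mk]
  have hker : p.map q.mkQ ⊓ ker (factor hqm) = m.map q.mkQ := by
    rw [factor, ker_mapQ, comap_id, inf_eq_right.2 (map_mono hmp)]
  rw [relRank_eq_rank_map_mkQ q p, ← rank_map_add_rank_inf_ker (factor hqm), hmap, hker, add_comm,
    relRank_eq_rank_map_mkQ, relRank_eq_rank_map_mkQ]

theorem relRank_inf_add_relRank_sup {q p : Submodule R M} (hqp : q ≤ p) (s : Submodule R M) :
    relRank (q ⊓ s) (p ⊓ s) + relRank (q ⊔ s) (p ⊔ s) = relRank q p := by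
  have hinf : relRank (q ⊓ s) (p ⊓ s) = relRank q (q ⊔ p ⊓ s) := by
    rw [sup_comm, relRank_sup_right, ← relRank_inf_left (p ⊓ s) q, inf_right_comm,
      inf_eq_right.2 hqp]
  have hsup : relRank (q ⊔ s) (p ⊔ s) = relRank (q ⊔ p ⊓ s) p := by
    have hjoin : p ⊔ s = p ⊔ (q ⊔ s) := by rw [← sup_assoc, sup_eq_left.2 hqp]
    have hmeet : q ⊔ p ⊓ s = p ⊓ (q ⊔ s) := by
      rw [inf_comm p s, ← sup_inf_assoc_of_le s hqp, inf_comm]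
    rw [hjoin, hmeet, relRank_sup_right, relRank_inf_left]
  rw [hinf, hsup, relRank_add_relRank le_sup_left (sup_le hqp inf_le_left)]

theorem relRank_inf_inf_add_relRank_sup_sup {I J P Q : Submodule R M} (hI : I ≤ P) (hJ : J ≤ Q) :
    relRank (I ⊓ J) (P ⊓ Q) + relRank (I ⊔ J) (P ⊔ Q) = relRank I P + relRank J Q := by
  have hP := relRank_inf_add_relRank_sup hI Q
  have hQ := relRank_inf_add_relRank_sup hJ I
  simp only [inf_comm _ I, sup_comm _ I] at hQ
  have hinf : relRank (I ⊓ J) (I ⊓ Q) + relRank (I ⊓ Q) (P ⊓ Q) = relRank (I ⊓ J) (P ⊓ Q) :=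
    relRank_add_relRank (inf_le_inf_left I hJ) (inf_le_inf_right Q hI)
  have hsup : relRank (I ⊔ J) (I ⊔ Q) + relRank (I ⊔ Q) (P ⊔ Q) = relRank (I ⊔ J) (P ⊔ Q) :=
    relRank_add_relRank (sup_le_sup_left hJ I) (sup_le_sup_right hI Q)
  rw [← hinf, ← hsup, ← hP, ← hQ]
  ring

end RelRank

section ThreeTerm

universe u v w₁ w₂

variable {R : Type v} [Ring R] [HasRankNullity.{u} R]
variable {U₀ : Type w₁} {U₁ : Type u} {U₂ : Type w₂}
variable [AddCommGroup U₀] [AddCommGroup U₁] [AddCommGroup U₂]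
variable [Module R U₀] [Module R U₁] [Module R U₂]
variable {d₀ : U₀ →ₗ[R] U₁} {d₁ : U₁ →ₗ[R] U₂} {δ₁ : U₁ →ₗ[R] U₀} {δ₂ : U₂ →ₗ[R] U₁}

/-- Here `d` stands for `∂` and `δ` for `∂̄`, with `U₀`, `U₁`, `U₂` in the roles of `U^{k-1}`,
`U^k`, `U^{k+1}`; the last two terms on the right are the ranks of `A^k` and `F^k`. -/
theorem relRank_bottChern_add_relRank_aeppli (hd : d₁ ∘ₗ d₀ = 0) (hδ : δ₁ ∘ₗ δ₂ = 0)
    (hanti : d₀ ∘ₗ δ₁ + δ₂ ∘ₗ d₁ = 0) :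
    relRank (range (d₀ ∘ₗ δ₁)) (ker d₁ ⊓ ker δ₁)
        + relRank (range d₀ ⊔ range δ₂) (ker (d₀ ∘ₗ δ₁))
      = relRank (range d₀) (ker d₁) + relRank (range δ₂) (ker δ₁)
        + (relRank (range (d₀ ∘ₗ δ₁)) (range d₀ ⊓ range δ₂)
          + relRank (ker d₁ ⊔ ker δ₁) (ker (d₀ ∘ₗ δ₁))) := by
  have hneg : d₀ ∘ₗ δ₁ = δ₂ ∘ₗ (-d₁) := by rw [comp_neg, eq_neg_of_add_eq_zero_left hanti]
  have hId : range d₀ ≤ ker d₁ := range_le_ker_iff.2 hd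
  have hIδ : range δ₂ ≤ ker δ₁ := range_le_ker_iff.2 hδ
  have hrange : range (d₀ ∘ₗ δ₁) ≤ range d₀ ⊓ range δ₂ :=
    le_inf (range_comp_le_range _ _) (hneg ▸ range_comp_le_range _ _)
  have hker : ker d₁ ⊔ ker δ₁ ≤ ker (d₀ ∘ₗ δ₁) :=
    sup_le (by rw [hneg, ← ker_neg d₁]; exact ker_le_ker_comp _ _) (ker_le_ker_comp _ _)
  rw [← relRank_add_relRank hrange (inf_le_inf hId hIδ),
    ← relRank_add_relRank (sup_le_sup hId hIδ) hker,
    ← relRank_inf_inf_add_relRank_sup_sup hId hIδ]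
  ring

theorem angella_tomassini_inequality_general (hd : d₁ ∘ₗ d₀ = 0) (hδ : δ₁ ∘ₗ δ₂ = 0)
    (hanti : d₀ ∘ₗ δ₁ + δ₂ ∘ₗ d₁ = 0) :
    relRank (range d₀) (ker d₁) + relRank (range δ₂) (ker δ₁)
      ≤ relRank (range (d₀ ∘ₗ δ₁)) (ker d₁ ⊓ ker δ₁)
        + relRank (range d₀ ⊔ range δ₂) (ker (d₀ ∘ₗ δ₁)) :=
  (relRank_bottChern_add_relRank_aeppli hd hδ hanti).symm ▸ self_le_add_right _ _

end ThreeTerm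

section Graded

variable {U : ℤ → Type*} [∀ k, AddCommGroup (U k)] [∀ k, Module ℂ (U k)]

theorem comp_castU_comp_eq_zero {s : ℤ → ℤ} (T : ∀ k : ℤ, U k →ₗ[ℂ] U (s k))
    {a b : ℤ} (hT : T (s a) ∘ₗ T a = 0) (h : s a = b) : T b ∘ₗ castU U h ∘ₗ T a = 0 := by
  subst h
  exact hT

end Graded

/-- the Angella–Tomassini Frölicher-type inequality, in its algebraic form:
`dim H^k_BC + dim H^k_A ≥ dim H^k_∂ + dim H^k_∂̄`. -/
theorem angella_tomassini_inequality
    (n : ℕ) (U : ℤ → Type*) [∀ k, AddCommGroup (U k)] [∀ k, Module ℂ (U k)]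
    (hvan : ∀ k : ℤ, (n : ℤ) < |k| → ∀ x : U k, x = 0)
    (D : ∀ k : ℤ, U k →ₗ[ℂ] U (k + 1)) (Db : ∀ k : ℤ, U k →ₗ[ℂ] U (k - 1))
    (hD2 : ∀ k : ℤ, (D (k + 1)).comp (D k) = 0)
    (hDb2 : ∀ k : ℤ, (Db (k - 1)).comp (Db k) = 0)
    (hanti : ∀ k : ℤ, ddbar U D Db k
      + (castU U (show k + 1 - 1 = k by ring)).comp ((Db (k + 1)).comp (D k)) = 0)
    (k : ℤ)
    (h1 : FiniteDimensional ℂ (Hd U D k))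
    (h2 : FiniteDimensional ℂ (Hdb U Db k))
    (h3 : FiniteDimensional ℂ (HBC U D Db k))
    (h4 : FiniteDimensional ℂ (HA U D Db k))
    (h5 : FiniteDimensional ℂ (Avar U D Db k))
    (h6 : FiniteDimensional ℂ (Bvar U D Db k))
    (h7 : FiniteDimensional ℂ (Cvar U D Db k))
    (h8 : FiniteDimensional ℂ (Dvar U D Db k))
    (h9 : FiniteDimensional ℂ (Evar U D Db k))
    (h10 : FiniteDimensional ℂ (Fvar U D Db k)) :
    finrank ℂ (Hd U D k) + finrank ℂ (Hdb U Db k)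
      ≤ finrank ℂ (HBC U D Db k) + finrank ℂ (HA U D Db k) := by
  have hrank : Module.rank ℂ (Hd U D k) + Module.rank ℂ (Hdb U Db k)
      ≤ Module.rank ℂ (HBC U D Db k) + Module.rank ℂ (HA U D Db k) :=
    angella_tomassini_inequality_general
      (comp_castU_comp_eq_zero D (hD2 (k - 1)) (sub_add_cancel k 1))
      (comp_castU_comp_eq_zero Db (hDb2 (k + 1)) (add_sub_cancel_right k 1)) (hanti k)
  simp only [← finrank_eq_rank] at hrank
  exact_mod_cast hrank
end

section
/- Suppose that in degree k the spaces H^k_∂, H^k_∂̄, H^k_BC, H^k_A, A^k, B^k, C^k, D^k, E^k, F^k are all finite-dimensional. Then dim H^k_BC + dim H^k_A = dim H^k_∂ + dim H^k_∂̄ + dim A^k + dim F^k. -/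
open Submodule LinearMap Module

/-!
The maps `x ↦ (x, x)` and `(x, y) ↦ x - y` induce a short exact sequence
`0 → (K ∩ L)/(I ∩ J) → K/I × L/J → (K + L)/(I + J) → 0` for all `I ≤ K` and `J ≤ L`.
With `K = ker ∂`, `L = ker ∂̄`, `I = im ∂` and `J = im ∂̄` its middle term is `H_∂ × H_∂̄`.
Its outer terms differ from `H_BC` and `H_A` only by `A = (I ∩ J)/im ∂∂̄` and
`F = ker ∂∂̄/(K + L)`, because `im ∂∂̄ ≤ I ∩ J ≤ K ∩ L` and `I + J ≤ K + L ≤ ker ∂∂̄`.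
-/

section Subquotient

variable {R : Type*} {V : Type*} [Ring R] [AddCommGroup V] [Module R V]

/-- The map `p/q → p'/q'` induced by inclusions `p ≤ p'` and `q ≤ q'`. This is `qmap` over an
arbitrary ring; `q` is not assumed to lie in `p`, and `p/q` stands for `p/(p ∩ q)`. -/
def subquotientMap {p p' q q' : Submodule R V} (hp : p ≤ p') (hq : q ≤ q') :
    (p ⧸ q.submoduleOf p) →ₗ[R] p' ⧸ q'.submoduleOf p' :=
  mapQ _ _ (inclusion hp) fun _ hx => hq hx

theorem subquotientMap_mk {p p' q q' : Submodule R V} (hp : p ≤ p') (hq : q ≤ q') (x : p) :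
    subquotientMap hp hq (Submodule.Quotient.mk x) = Submodule.Quotient.mk (inclusion hp x) :=
  rfl

theorem subquotient_mk_eq_zero {p q : Submodule R V} {x : p} :
    (Submodule.Quotient.mk x : p ⧸ q.submoduleOf p) = 0 ↔ (x : V) ∈ q :=
  Submodule.Quotient.mk_eq_zero _

theorem subquotientMap_mk_eq_zero {p p' q q' : Submodule R V} {hp : p ≤ p'} {hq : q ≤ q'}
    {x : p} : subquotientMap hp hq (Submodule.Quotient.mk x) = 0 ↔ (x : V) ∈ q' :=
  subquotient_mk_eq_zero

theorem subquotient_mk_eq_mk {p q : Submodule R V} {x y : p} :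
    (Submodule.Quotient.mk x : p ⧸ q.submoduleOf p) = Submodule.Quotient.mk y ↔
      (x : V) - y ∈ q :=
  Submodule.Quotient.eq _

theorem subquotientMap_injective {p r : Submodule R V} (q : Submodule R V) (hr : r ≤ p) :
    Function.Injective (subquotientMap hr (le_refl q)) := by
  rw [injective_iff_map_eq_zero]
  rintro ⟨x⟩ hx
  exact subquotient_mk_eq_zero.2 (subquotientMap_mk_eq_zero.1 hx)

theorem subquotientMap_surjective {q r : Submodule R V} (p : Submodule R V) (hq : q ≤ r) :
    Function.Surjective (subquotientMap (le_refl p) hq) := by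
  rintro ⟨x⟩
  exact ⟨Submodule.Quotient.mk x, rfl⟩

theorem exact_subquotientMap {p q r : Submodule R V} (hq : q ≤ r) (hr : r ≤ p) :
    Function.Exact (subquotientMap hr (le_refl q)) (subquotientMap (le_refl p) hq) := by
  rintro ⟨x⟩
  constructor
  · intro hx
    exact ⟨Submodule.Quotient.mk ⟨x, subquotientMap_mk_eq_zero.1 hx⟩, rfl⟩
  · rintro ⟨⟨y⟩, hy⟩
    rw [← hy]
    exact subquotient_mk_eq_zero.2 y.2

section MayerVietoris

variable {K L I J : Submodule R V}

variable (K L I J) in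
/-- The diagonal map `(K ∩ L)/(I ∩ J) → K/I × L/J` of the Mayer–Vietoris sequence of two
subquotients. -/
def subquotientDiag :
    (↥(K ⊓ L) ⧸ (I ⊓ J).submoduleOf (K ⊓ L)) →ₗ[R]
      (K ⧸ I.submoduleOf K) × (L ⧸ J.submoduleOf L) :=
  (subquotientMap inf_le_left inf_le_left).prod (subquotientMap inf_le_right inf_le_right)

variable (K L I J) in
/-- The difference map `K/I × L/J → (K + L)/(I + J)` of the Mayer–Vietoris sequence of two
subquotients. -/
def subquotientDiff :
    ((K ⧸ I.submoduleOf K) × (L ⧸ J.submoduleOf L)) →ₗ[R]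
      ↥(K ⊔ L) ⧸ (I ⊔ J).submoduleOf (K ⊔ L) :=
  (subquotientMap le_sup_left le_sup_left).coprod (-subquotientMap le_sup_right le_sup_right)

theorem subquotientDiff_mk (x : K) (y : L) :
    subquotientDiff K L I J (Submodule.Quotient.mk x, Submodule.Quotient.mk y) =
      Submodule.Quotient.mk
        (inclusion (le_sup_left : K ≤ K ⊔ L) x - inclusion (le_sup_right : L ≤ K ⊔ L) y) := by
  simp [subquotientDiff, subquotientMap_mk, sub_eq_add_neg]

theorem subquotientDiag_injective : Function.Injective (subquotientDiag K L I J) := by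
  rw [injective_iff_map_eq_zero]
  rintro ⟨x⟩ hx
  have hx' := Prod.mk_eq_zero.1 hx
  exact subquotient_mk_eq_zero.2
    ⟨subquotientMap_mk_eq_zero.1 hx'.1, subquotientMap_mk_eq_zero.1 hx'.2⟩

theorem subquotientDiff_surjective : Function.Surjective (subquotientDiff K L I J) := by
  rintro ⟨z, hz⟩
  obtain ⟨x, hx, y, hy, rfl⟩ := mem_sup.1 hz
  refine ⟨(Submodule.Quotient.mk ⟨x, hx⟩, Submodule.Quotient.mk ⟨-y, neg_mem hy⟩), ?_⟩
  refine (subquotientDiff_mk _ _).trans (congrArg _ (Subtype.ext ?_))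
  exact sub_neg_eq_add x y

theorem exact_subquotientDiag_subquotientDiff (hI : I ≤ K) (hJ : J ≤ L) :
    Function.Exact (subquotientDiag K L I J) (subquotientDiff K L I J) := by
  rintro ⟨⟨x⟩, ⟨y⟩⟩
  constructor
  · intro hxy
    have hsub : (x : V) - y ∈ I ⊔ J :=
      subquotient_mk_eq_zero.1 ((subquotientDiff_mk x y).symm.trans hxy)
    obtain ⟨i, hi, j, hj, hij⟩ := mem_sup.1 hsub
    -- `x - i = y + j` lies in `K ∩ L` and represents both classes.
    have hz : (x : V) - i = y + j := by
      rw [sub_eq_iff_eq_add, add_assoc, add_comm j i, hij, add_sub_cancel]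
    have hzL : (x : V) - i ∈ L := hz ▸ add_mem y.2 (hJ hj)
    refine ⟨Submodule.Quotient.mk ⟨x - i, sub_mem x.2 (hI hi), hzL⟩, Prod.ext ?_ ?_⟩
    · refine subquotient_mk_eq_mk.2 ?_
      simpa using hi
    · refine subquotient_mk_eq_mk.2 ?_
      simpa [hz] using hj
  · rintro ⟨⟨z⟩, hz⟩
    rw [← hz]
    refine (subquotientDiff_mk _ _).trans (subquotient_mk_eq_zero.2 ?_)
    simp

end MayerVietoris

end Subquotient

section Rank

universe v

variable {R : Type*} [Ring R] [HasRankNullity.{v} R]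

theorem rank_eq_add_of_exact {M N P : Type v} [AddCommGroup M] [Module R M] [AddCommGroup N]
    [Module R N] [AddCommGroup P] [Module R P] {f : M →ₗ[R] N} {g : N →ₗ[R] P}
    (hf : Function.Injective f) (hg : Function.Surjective g) (hfg : Function.Exact f g) :
    Module.rank R N = Module.rank R M + Module.rank R P := by
  rw [← rank_range_add_rank_ker g, hfg.linearMap_ker_eq, rank_range_of_surjective g hg,
    rank_range_of_injective f hf, add_comm]

variable {V : Type v} [AddCommGroup V] [Module R V]

theorem rank_subquotient_eq_add {p q r : Submodule R V} (hq : q ≤ r) (hr : r ≤ p) :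
    Module.rank R (p ⧸ q.submoduleOf p) =
      Module.rank R (r ⧸ q.submoduleOf r) + Module.rank R (p ⧸ r.submoduleOf p) :=
  rank_eq_add_of_exact (subquotientMap_injective q hr) (subquotientMap_surjective p hq)
    (exact_subquotientMap hq hr)

theorem rank_subquotient_sup_sup_add_inf_inf {K L I J : Submodule R V} (hI : I ≤ K)
    (hJ : J ≤ L) :
    Module.rank R (↥(K ⊔ L) ⧸ (I ⊔ J).submoduleOf (K ⊔ L)) +
        Module.rank R (↥(K ⊓ L) ⧸ (I ⊓ J).submoduleOf (K ⊓ L)) =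
      Module.rank R (K ⧸ I.submoduleOf K) + Module.rank R (L ⧸ J.submoduleOf L) := by
  rw [add_comm, ← rank_eq_add_of_exact subquotientDiag_injective subquotientDiff_surjective
    (exact_subquotientDiag_subquotientDiff hI hJ)]
  exact rank_eq_add_of_exact inl_injective snd_surjective .inl_snd

theorem rank_inf_subquotient_add_rank_subquotient_sup {K L I J P Q : Submodule R V}
    (hI : I ≤ K) (hJ : J ≤ L) (hQ : Q ≤ I ⊓ J) (hP : K ⊔ L ≤ P) :
    Module.rank R (↥(K ⊓ L) ⧸ Q.submoduleOf (K ⊓ L)) +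
        Module.rank R (P ⧸ (I ⊔ J).submoduleOf P) =
      Module.rank R (K ⧸ I.submoduleOf K) + Module.rank R (L ⧸ J.submoduleOf L) +
        Module.rank R (↥(I ⊓ J) ⧸ Q.submoduleOf (I ⊓ J)) +
        Module.rank R (P ⧸ (K ⊔ L).submoduleOf P) := by
  rw [← rank_subquotient_sup_sup_add_inf_inf hI hJ,
    rank_subquotient_eq_add hQ (inf_le_inf hI hJ), rank_subquotient_eq_add (sup_le_sup hI hJ) hP]
  ring

end Rank

section DoubleComplex

variable {U : ℤ → Type*} [∀ k, AddCommGroup (U k)] [∀ k, Module ℂ (U k)]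

theorem map_castU {s : ℤ → ℤ} (T : ∀ k, U k →ₗ[ℂ] U (s k)) {a b : ℤ} (h : a = b) (x : U a) :
    T b (castU U h x) = castU U (congrArg s h) (T a x) := by
  subst h
  rfl

variable {D : ∀ k : ℤ, U k →ₗ[ℂ] U (k + 1)} {Db : ∀ k : ℤ, U k →ₗ[ℂ] U (k - 1)}

theorem imD_le_kerD (hD2 : ∀ k, (D (k + 1)).comp (D k) = 0) (k : ℤ) :
    imD U D k ≤ kerD U D k := by
  rintro _ ⟨x, rfl⟩
  have hx : D (k - 1 + 1) (D (k - 1) x) = 0 := LinearMap.congr_fun (hD2 (k - 1)) x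
  exact (map_castU D _ _).trans (by rw [hx, map_zero])

theorem imDb_le_kerDb (hDb2 : ∀ k, (Db (k - 1)).comp (Db k) = 0) (k : ℤ) :
    imDb U Db k ≤ kerDb U Db k := by
  rintro _ ⟨x, rfl⟩
  have hx : Db (k + 1 - 1) (Db (k + 1) x) = 0 := LinearMap.congr_fun (hDb2 (k + 1)) x
  exact (map_castU Db _ _).trans (by rw [hx, map_zero])

variable (D Db) in
theorem imDDbar_le_imD (k : ℤ) : imDDbar U D Db k ≤ imD U D k :=
  range_comp_le_range (Db k) ((castU U _).comp (D (k - 1)))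

variable (D Db) in
theorem kerDb_le_kerDDbar (k : ℤ) : kerDb U Db k ≤ kerDDbar U D Db k :=
  ker_le_ker_comp (Db k) ((castU U _).comp (D (k - 1)))

section Anticommute

variable {k : ℤ}
  (hanti : ddbar U D Db k +
    (castU U (show k + 1 - 1 = k by ring)).comp ((Db (k + 1)).comp (D k)) = 0)
include hanti

theorem ddbar_eq_neg_comp :
    ddbar U D Db k = (-(castU U (show k + 1 - 1 = k by ring)).comp (Db (k + 1))).comp (D k) :=
  eq_neg_of_add_eq_zero_left hanti

theorem imDDbar_le_imDb : imDDbar U D Db k ≤ imDb U Db k := by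
  rw [imDDbar, ddbar_eq_neg_comp hanti]
  exact (range_comp_le_range _ _).trans_eq (range_neg _)

theorem kerD_le_kerDDbar : kerD U D k ≤ kerDDbar U D Db k := by
  rw [kerDDbar, ddbar_eq_neg_comp hanti]
  exact ker_le_ker_comp _ _

end Anticommute

end DoubleComplex

theorem dim_BC_add_dim_A_eq_general
    (U : ℤ → Type*) [∀ k, AddCommGroup (U k)] [∀ k, Module ℂ (U k)]
    (D : ∀ k : ℤ, U k →ₗ[ℂ] U (k + 1)) (Db : ∀ k : ℤ, U k →ₗ[ℂ] U (k - 1))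
    (hD2 : ∀ k : ℤ, (D (k + 1)).comp (D k) = 0)
    (hDb2 : ∀ k : ℤ, (Db (k - 1)).comp (Db k) = 0)
    (hanti : ∀ k : ℤ, ddbar U D Db k
      + (castU U (show k + 1 - 1 = k by ring)).comp ((Db (k + 1)).comp (D k)) = 0)
    (k : ℤ) :
    Module.rank ℂ (HBC U D Db k) + Module.rank ℂ (HA U D Db k)
      = Module.rank ℂ (Hd U D k) + Module.rank ℂ (Hdb U Db k)
        + Module.rank ℂ (Avar U D Db k) + Module.rank ℂ (Fvar U D Db k) :=
  rank_inf_subquotient_add_rank_subquotient_sup (imD_le_kerD hD2 k) (imDb_le_kerDb hDb2 k)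
    (le_inf (imDDbar_le_imD D Db k) (imDDbar_le_imDb (hanti k)))
    (sup_le (kerD_le_kerDDbar (hanti k)) (kerDb_le_kerDDbar D Db k))

/-- `dim H^k_BC + dim H^k_A = dim H^k_∂ + dim H^k_∂̄ + dim A^k + dim F^k`. -/
theorem dim_BC_add_dim_A_eq
    (n : ℕ) (U : ℤ → Type*) [∀ k, AddCommGroup (U k)] [∀ k, Module ℂ (U k)]
    (hvan : ∀ k : ℤ, (n : ℤ) < |k| → ∀ x : U k, x = 0)
    (D : ∀ k : ℤ, U k →ₗ[ℂ] U (k + 1)) (Db : ∀ k : ℤ, U k →ₗ[ℂ] U (k - 1))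
    (hD2 : ∀ k : ℤ, (D (k + 1)).comp (D k) = 0)
    (hDb2 : ∀ k : ℤ, (Db (k - 1)).comp (Db k) = 0)
    (hanti : ∀ k : ℤ, ddbar U D Db k
      + (castU U (show k + 1 - 1 = k by ring)).comp ((Db (k + 1)).comp (D k)) = 0)
    (k : ℤ)
    (h1 : FiniteDimensional ℂ (Hd U D k))
    (h2 : FiniteDimensional ℂ (Hdb U Db k))
    (h3 : FiniteDimensional ℂ (HBC U D Db k))
    (h4 : FiniteDimensional ℂ (HA U D Db k))
    (h5 : FiniteDimensional ℂ (Avar U D Db k))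
    (h6 : FiniteDimensional ℂ (Bvar U D Db k))
    (h7 : FiniteDimensional ℂ (Cvar U D Db k))
    (h8 : FiniteDimensional ℂ (Dvar U D Db k))
    (h9 : FiniteDimensional ℂ (Evar U D Db k))
    (h10 : FiniteDimensional ℂ (Fvar U D Db k)) :
    finrank ℂ (HBC U D Db k) + finrank ℂ (HA U D Db k)
      = finrank ℂ (Hd U D k) + finrank ℂ (Hdb U Db k)
        + finrank ℂ (Avar U D Db k) + finrank ℂ (Fvar U D Db k) := by
  have h := dim_BC_add_dim_A_eq_general U D Db hD2 hDb2 hanti k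
  simpa only [← finrank_eq_rank, ← Nat.cast_add, Nat.cast_inj] using h
end

section
/- For fixed p ≥ 0 and q ≥ 1, if the map φ^{p,q}_- : H^{p,q}_BC → H^{p,q}_∂̄ is injective, then the map φ^{p,q-1}_+ : H^{p,q-1}_BC → H^{p,q-1}_∂ is surjective. -/
open Submodule LinearMap Module

section Setup

variable (A : ℤ → ℤ → Type*) [∀ p q, AddCommGroup (A p q)] [∀ p q, Module ℂ (A p q)]

/-- The identification `A p q → A p' q'` induced by equalities of the bidegrees. -/
def castA {p q p' q' : ℤ} (h : p = p') (h' : q = q') : A p q →ₗ[ℂ] A p' q' := by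
  subst h; subst h'; exact LinearMap.id

variable (d : ∀ p q : ℤ, A p q →ₗ[ℂ] A (p + 1) q) (db : ∀ p q : ℤ, A p q →ₗ[ℂ] A p (q + 1))

/-- The composite `∂∂̄ : A^{p,q} → A^{p+1,q} → A^{p+1,q+1}`. -/
def ddb (p q : ℤ) : A p q →ₗ[ℂ] A (p + 1) (q + 1) := (db (p + 1) q).comp (d p q)

/-- `ker ∂ ∩ A^{p,q}` -/
def kerd (p q : ℤ) : Submodule ℂ (A p q) := LinearMap.ker (d p q)

/-- `ker ∂̄ ∩ A^{p,q}` -/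
def kerdb (p q : ℤ) : Submodule ℂ (A p q) := LinearMap.ker (db p q)

/-- `∂(A^{p-1,q})` -/
def imd (p q : ℤ) : Submodule ℂ (A p q) :=
  LinearMap.range ((castA A (show p - 1 + 1 = p by ring) rfl).comp (d (p - 1) q))

/-- `∂̄(A^{p,q-1})` -/
def imdb (p q : ℤ) : Submodule ℂ (A p q) :=
  LinearMap.range ((castA A rfl (show q - 1 + 1 = q by ring)).comp (db p (q - 1)))

/-- `(∂∂̄)(A^{p-1,q-1})` -/
def imddb (p q : ℤ) : Submodule ℂ (A p q) :=
  LinearMap.range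
    ((castA A (show p - 1 + 1 = p by ring) (show q - 1 + 1 = q by ring)).comp
      (ddb A d db (p - 1) (q - 1)))

end Setup

section Cohomology

variable (A : ℤ → ℤ → Type*) [∀ p q, AddCommGroup (A p q)] [∀ p q, Module ℂ (A p q)]
variable (d : ∀ p q : ℤ, A p q →ₗ[ℂ] A (p + 1) q) (db : ∀ p q : ℤ, A p q →ₗ[ℂ] A p (q + 1))

/-- `H^{p,q}_∂ = (ker ∂ ∩ A^{p,q})/∂(A^{p-1,q})` -/
abbrev Hpqd (p q : ℤ) := SubQuot (kerd A d p q) (imd A d p q)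

/-- `H^{p,q}_∂̄ = (ker ∂̄ ∩ A^{p,q})/∂̄(A^{p,q-1})` -/
abbrev Hpqdb (p q : ℤ) := SubQuot (kerdb A db p q) (imdb A db p q)

/-- `H^{p,q}_BC = (ker ∂ ∩ ker ∂̄ ∩ A^{p,q})/(∂∂̄)(A^{p-1,q-1})` -/
abbrev HpqBC (p q : ℤ) := SubQuot (kerd A d p q ⊓ kerdb A db p q) (imddb A d db p q)

end Cohomology

section Lemmas

variable (A : ℤ → ℤ → Type*) [∀ p q, AddCommGroup (A p q)] [∀ p q, Module ℂ (A p q)]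
variable (d : ∀ p q : ℤ, A p q →ₗ[ℂ] A (p + 1) q) (db : ∀ p q : ℤ, A p q →ₗ[ℂ] A p (q + 1))

lemma castA_castA {p q p' q' p'' q'' : ℤ} (h1 : p = p') (h2 : q = q') (h3 : p' = p'')
    (h4 : q' = q'') (x : A p q) :
    castA A h3 h4 (castA A h1 h2 x) = castA A (h1.trans h3) (h2.trans h4) x := by
  subst h1; subst h2; subst h3; subst h4; rfl

lemma d_castA {p q p' q' : ℤ} (h : p = p') (h' : q = q') (x : A p q) :
    d p' q' (castA A h h' x) = castA A (show p + 1 = p' + 1 by rw [h]) h' (d p q x) := by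
  subst h; subst h'; rfl

lemma db_castA {p q p' q' : ℤ} (h : p = p') (h' : q = q') (x : A p q) :
    db p' q' (castA A h h' x) = castA A h (show q + 1 = q' + 1 by rw [h']) (db p q x) := by
  subst h; subst h'; rfl

lemma imddb_le_imdb (p q : ℤ) : imddb A d db p q ≤ imdb A db p q := by
  rintro x ⟨y, rfl⟩
  refine ⟨castA A (show p - 1 + 1 = p by ring) rfl (d (p - 1) (q - 1) y), ?_⟩
  simp only [LinearMap.comp_apply, ddb, db_castA, castA_castA]

lemma imddb_le_imd
    (hanti : ∀ p q : ℤ, (db (p + 1) q).comp (d p q) + (d p (q + 1)).comp (db p q) = 0)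
    (p q : ℤ) : imddb A d db p q ≤ imd A d p q := by
  rintro x ⟨y, rfl⟩
  refine ⟨-(castA A rfl (show q - 1 + 1 = q by ring) (db (p - 1) (q - 1) y)), ?_⟩
  have h := DFunLike.congr_fun (hanti (p - 1) (q - 1)) y
  simp only [LinearMap.add_apply, LinearMap.comp_apply, LinearMap.zero_apply] at h
  simp only [LinearMap.comp_apply, map_neg, d_castA, castA_castA, ddb]
  rw [eq_neg_of_add_eq_zero_left h, map_neg]

end Lemmas

section Phi

variable (A : ℤ → ℤ → Type*) [∀ p q, AddCommGroup (A p q)] [∀ p q, Module ℂ (A p q)]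
variable (d : ∀ p q : ℤ, A p q →ₗ[ℂ] A (p + 1) q) (db : ∀ p q : ℤ, A p q →ₗ[ℂ] A p (q + 1))
variable (hanti : ∀ p q : ℤ, (db (p + 1) q).comp (d p q) + (d p (q + 1)).comp (db p q) = 0)

/-- `φ^{p,q}_+ : H^{p,q}_BC → H^{p,q}_∂`, induced by the identity on representatives. -/
def phiPlus (p q : ℤ) : HpqBC A d db p q →ₗ[ℂ] Hpqd A d p q :=
  qmap inf_le_left (imddb_le_imd A d db hanti p q)

/-- `φ^{p,q}_- : H^{p,q}_BC → H^{p,q}_∂̄`, induced by the identity on representatives. -/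
def phiMinus (p q : ℤ) : HpqBC A d db p q →ₗ[ℂ] Hpqdb A db p q :=
  qmap inf_le_right (imddb_le_imdb A d db p q)

end Phi

/-!
Injectivity of `φ_-` in bidegree `(p, q + 1)` says `ker ∂ ∩ im ∂̄ ⊆ im ∂∂̄` there. Surjectivity of
`φ_+` in bidegree `(p, q)` says `ker ∂ ⊆ (ker ∂ ∩ ker ∂̄) + im ∂`; by the modular law this is
`ker ∂ ⊆ ker ∂̄ + im ∂`, that is, `∂̄(ker ∂) ⊆ ∂̄(im ∂) = im ∂∂̄`. Since `∂` and `∂̄` anticommute,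
`∂̄(ker ∂) ⊆ ker ∂ ∩ im ∂̄`, so the first condition implies the second.
-/

section QuotientMap

variable {V : Type*} [AddCommGroup V] [Module ℂ V] {p p' q q' : Submodule ℂ V}

theorem qmap_injective_iff (hp : p ≤ p') (hq : q ≤ q') :
    Function.Injective (qmap hp hq) ↔ p ⊓ q' ≤ q := by
  rw [injective_iff_map_eq_zero, (Submodule.Quotient.mk_surjective _).forall]
  simp only [qmap, Submodule.mapQ_apply, Submodule.Quotient.mk_eq_zero, Submodule.mem_comap,
    Submodule.subtype_apply, Submodule.coe_inclusion, Subtype.forall]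
  exact ⟨fun h x hx => h x hx.1 hx.2, fun h x hxp hxq => h ⟨hxp, hxq⟩⟩

theorem qmap_surjective_iff (hp : p ≤ p') (hq : q ≤ q') :
    Function.Surjective (qmap hp hq) ↔ p' ≤ p ⊔ q' := by
  simp only [Function.Surjective, (Submodule.Quotient.mk_surjective _).forall,
    (Submodule.Quotient.mk_surjective _).exists, qmap, Submodule.mapQ_apply,
    Submodule.Quotient.eq', Submodule.mem_comap, Submodule.subtype_apply, Submodule.coe_add,
    Submodule.coe_neg, Submodule.coe_inclusion, Subtype.forall, Subtype.exists]
  refine forall₂_congr fun x _ => ?_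
  rw [Submodule.mem_sup]
  constructor
  · rintro ⟨y, hy, hyx⟩
    exact ⟨y, hy, -y + x, hyx, add_neg_cancel_left y x⟩
  · rintro ⟨y, hy, z, hz, rfl⟩
    exact ⟨y, hy, by rwa [neg_add_cancel_left]⟩

end QuotientMap

section DoubleComplex

variable {A : ℤ → ℤ → Type*} [∀ p q, AddCommGroup (A p q)] [∀ p q, Module ℂ (A p q)]
variable (d : ∀ p q : ℤ, A p q →ₗ[ℂ] A (p + 1) q) (db : ∀ p q : ℤ, A p q →ₗ[ℂ] A p (q + 1))

theorem imdb_add_one (p q : ℤ) : imdb A db p (q + 1) = LinearMap.range (db p q) := by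
  have transport : ∀ (r : ℤ) (h : r = q),
      LinearMap.range ((castA A rfl (congrArg (· + 1) h)).comp (db p r)) =
        LinearMap.range (db p q) := by
    rintro r rfl
    rfl
  exact transport (q + 1 - 1) (add_sub_cancel_right q 1)

theorem imddb_add_one (p q : ℤ) :
    imddb A d db p (q + 1) = (imd A d p q).map (db p q) := by
  have transport : ∀ (s r : ℤ) (hs : s + 1 = p) (hr : r = q),
      LinearMap.range ((castA A hs (congrArg (· + 1) hr)).comp (ddb A d db s r)) =
        (LinearMap.range ((castA A hs rfl).comp (d s q))).map (db p q) := by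
    rintro s r rfl rfl
    exact LinearMap.range_comp (d s r) (db (s + 1) r)
  exact transport (p - 1) (q + 1 - 1) (sub_add_cancel p 1) (add_sub_cancel_right q 1)

variable {d db}

theorem imd_le_kerd (hd2 : ∀ p q : ℤ, (d (p + 1) q).comp (d p q) = 0) (p q : ℤ) :
    imd A d p q ≤ kerd A d p q := by
  rintro _ ⟨y, rfl⟩
  have hy : d (p - 1 + 1) q (d (p - 1) q y) = 0 := DFunLike.congr_fun (hd2 (p - 1) q) y
  rw [kerd, LinearMap.mem_ker, LinearMap.comp_apply, d_castA, hy, map_zero]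

theorem imdb_le_kerdb (hdb2 : ∀ p q : ℤ, (db p (q + 1)).comp (db p q) = 0) (p q : ℤ) :
    imdb A db p q ≤ kerdb A db p q := by
  rintro _ ⟨y, rfl⟩
  have hy : db p (q - 1 + 1) (db p (q - 1) y) = 0 := DFunLike.congr_fun (hdb2 p (q - 1)) y
  rw [kerdb, LinearMap.mem_ker, LinearMap.comp_apply, db_castA, hy, map_zero]

theorem map_db_kerd_le_kerd
    (hanti : ∀ p q : ℤ, (db (p + 1) q).comp (d p q) + (d p (q + 1)).comp (db p q) = 0)
    (p q : ℤ) : (kerd A d p q).map (db p q) ≤ kerd A d p (q + 1) := by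
  rintro _ ⟨x, hx, rfl⟩
  have hx : d p q x = 0 := hx
  have anticomm : db (p + 1) q (d p q x) + d p (q + 1) (db p q x) = 0 :=
    DFunLike.congr_fun (hanti p q) x
  rwa [hx, map_zero, zero_add] at anticomm

theorem phiMinus_injective_iff (hdb2 : ∀ p q : ℤ, (db p (q + 1)).comp (db p q) = 0) (p q : ℤ) :
    Function.Injective (phiMinus A d db p q) ↔
      kerd A d p q ⊓ imdb A db p q ≤ imddb A d db p q := by
  rw [phiMinus, qmap_injective_iff, inf_assoc, inf_eq_right.2 (imdb_le_kerdb hdb2 p q)]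

theorem phiPlus_surjective_iff (hd2 : ∀ p q : ℤ, (d (p + 1) q).comp (d p q) = 0)
    (hanti : ∀ p q : ℤ, (db (p + 1) q).comp (d p q) + (d p (q + 1)).comp (db p q) = 0)
    (p q : ℤ) :
    Function.Surjective (phiPlus A d db hanti p q) ↔
      (kerd A d p q).map (db p q) ≤ imddb A d db p (q + 1) := by
  have modular : kerd A d p q ⊓ kerdb A db p q ⊔ imd A d p q =
      kerd A d p q ⊓ (kerdb A db p q ⊔ imd A d p q) :=
    inf_sup_assoc_of_le _ (imd_le_kerd hd2 p q)
  rw [phiPlus, qmap_surjective_iff, modular, le_inf_iff, and_iff_right le_rfl, imddb_add_one,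
    Submodule.map_le_iff_le_comap, Submodule.comap_map_eq, sup_comm, kerdb]

end DoubleComplex

theorem phiMinus_injective_implies_phiPlus_surjective_general
    {A : ℤ → ℤ → Type*} [∀ p q, AddCommGroup (A p q)] [∀ p q, Module ℂ (A p q)]
    {d : ∀ p q : ℤ, A p q →ₗ[ℂ] A (p + 1) q} {db : ∀ p q : ℤ, A p q →ₗ[ℂ] A p (q + 1)}
    (hd2 : ∀ p q : ℤ, (d (p + 1) q).comp (d p q) = 0)
    (hdb2 : ∀ p q : ℤ, (db p (q + 1)).comp (db p q) = 0)
    (hanti : ∀ p q : ℤ, (db (p + 1) q).comp (d p q) + (d p (q + 1)).comp (db p q) = 0)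
    (p q : ℤ) (hinj : Function.Injective (phiMinus A d db p (q + 1))) :
    Function.Surjective (phiPlus A d db hanti p q) := by
  rw [phiPlus_surjective_iff hd2]
  calc (kerd A d p q).map (db p q)
      ≤ kerd A d p (q + 1) ⊓ imdb A db p (q + 1) := by
        rw [imdb_add_one]
        exact le_inf (map_db_kerd_le_kerd hanti p q) LinearMap.map_le_range
    _ ≤ imddb A d db p (q + 1) := (phiMinus_injective_iff hdb2 p (q + 1)).1 hinj

/-- if `φ^{p,q}_-` is injective then `φ^{p,q-1}_+` is surjective. -/
theorem phiMinus_injective_implies_phiPlus_surjective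
    (A : ℤ → ℤ → Type*) [∀ p q, AddCommGroup (A p q)] [∀ p q, Module ℂ (A p q)]
    (hA0 : ∀ p q : ℤ, p < 0 ∨ q < 0 → ∀ x : A p q, x = 0)
    (d : ∀ p q : ℤ, A p q →ₗ[ℂ] A (p + 1) q) (db : ∀ p q : ℤ, A p q →ₗ[ℂ] A p (q + 1))
    (hd2 : ∀ p q : ℤ, (d (p + 1) q).comp (d p q) = 0)
    (hdb2 : ∀ p q : ℤ, (db p (q + 1)).comp (db p q) = 0)
    (hanti : ∀ p q : ℤ, (db (p + 1) q).comp (d p q) + (d p (q + 1)).comp (db p q) = 0)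
    (p q : ℤ) (hp : 0 ≤ p) (hq : 1 ≤ q)
    (hinj : Function.Injective ⇑(phiMinus A d db p q)) :
    Function.Surjective ⇑(phiPlus A d db hanti p (q - 1)) := by
  rw [← sub_add_cancel q 1] at hinj
  exact phiMinus_injective_implies_phiPlus_surjective_general hd2 hdb2 hanti p (q - 1) hinj
end
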